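/- (Quantitative non-convergence for polygonal neighborhoods, first-order kernel case.) Let N ≥ 3 be an integer and L₁ > 0. Let γ : (0,1] → [0,∞) be measurable with ∫₀¹ ρ³ γ(ρ) dρ < ∞ and π t³ γ(t) ≥ L₁ for almost every t ∈ [cos(π/N), 1]. Let S ⊂ ℝ² be a finite set with at most N elements, all lying on the unit circle {ξ : |ξ| = 1}, and let P be the convex hull of S. Then for each coordinate index i ∈ {1,2}, ∫_{B̄₁(0) \ P} ξ_i² γ(|ξ|) dξ ≥ (2 L₁ / π) · σ_{L,1}(π/N), where B̄₁(0) is the closed unit disk and σ_{L,1}(s) = s/2 + sin(2s)/4 − cos(s) · log(tan(s/2 + π/4)). -/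

import Mathlib

open MeasureTheory Metric Set Real

noncomputable section

/-- `σ_{L,1}(s) = s/2 + sin(2s)/4 − cos(s)·log(tan(s/2 + π/4))`. -/
def sigmaL1 (s : ℝ) : ℝ :=
  s / 2 + Real.sin (2 * s) / 4 - Real.cos s * Real.log (Real.tan (s / 2 + π / 4))

lemma cos_le_of_circle_norm {δ x : ℝ} (h0 : 0 ≤ δ) (h : δ ≤ ‖(x : AddCircle (2 * π))‖) :
    Real.cos x ≤ Real.cos δ := by
  have hp := Real.pi_pos
  have h2 : ‖(x : AddCircle (2 * π))‖ ≤ |2 * π| / 2 :=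
    AddCircle.norm_le_half_period _ (by positivity)
  rw [abs_of_pos (by positivity)] at h2
  rw [AddCircle.norm_eq] at h h2
  have : Real.cos x = Real.cos |x - round ((2 * π)⁻¹ * x) * (2 * π)| := by
    rw [Real.cos_abs, Real.cos_sub_int_mul_two_pi]
  rw [this]
  exact Real.cos_le_cos_of_nonneg_of_le_pi h0 (by linarith) h

lemma exists_gap (N : ℕ) (hN : 3 ≤ N) (A : Set ℝ) (hA : A.Finite) (hc : A.ncard ≤ N) :
    ∃ β : ℝ, ∀ t ∈ A, Real.cos (t - β) ≤ Real.cos (π / N) := by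
  have hp := Real.pi_pos
  have : Fact (0 < 2 * π) := ⟨by positivity⟩
  have hN0 : (0 : ℝ) < N := by positivity
  rcases A.eq_empty_or_nonempty with rfl | hne
  · exact ⟨0, by simp⟩
  set F : Set (AddCircle (2 * π)) := (fun t : ℝ => (t : AddCircle (2 * π))) '' A with hF
  have hFne : F.Nonempty := hne.image _
  obtain ⟨b, -, hb⟩ := (isCompact_univ (X := AddCircle (2 * π))).exists_isMaxOn univ_nonempty
    (Metric.continuous_infDist_pt F).continuousOn
  have key : π / N ≤ infDist b F := by
    by_contra! hlt
    obtain ⟨δ, h1, h2⟩ := exists_between hlt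
    have hδ0 : 0 ≤ δ := infDist_nonneg.trans h1.le
    have hcov : (univ : Set (AddCircle (2 * π))) ⊆ ⋃ t ∈ hA.toFinset, closedBall (t : AddCircle (2 * π)) δ := by
      intro x _
      have : infDist x F < δ := lt_of_le_of_lt (hb (mem_univ x)) h1
      obtain ⟨y, ⟨t, ht, rfl⟩, hy⟩ := (infDist_lt_iff hFne).1 this
      simp only [mem_iUnion]
      exact ⟨t, by simpa using ht, hy.le⟩
    have hm := (measure_mono (μ := volume) hcov).trans (measure_biUnion_finset_le _ _)
    rw [AddCircle.measure_univ] at hm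
    have hm2 : ∑ t ∈ hA.toFinset, volume (closedBall (t : AddCircle (2 * π)) δ) ≤
        ∑ t ∈ hA.toFinset, ENNReal.ofReal (2 * δ) := by
      refine Finset.sum_le_sum fun t _ => ?_
      rw [AddCircle.volume_closedBall]
      exact ENNReal.ofReal_le_ofReal (min_le_right _ _)
    have hm3 := hm.trans hm2
    rw [← ENNReal.ofReal_sum_of_nonneg (fun _ _ => by positivity),
      ENNReal.ofReal_le_ofReal_iff (by positivity), Finset.sum_const, nsmul_eq_mul,
      ← Set.ncard_eq_toFinset_card A hA] at hm3
    have : (A.ncard : ℝ) ≤ N := by exact_mod_cast hc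
    have h3 : δ * N < π := (lt_div_iff₀ hN0).1 h2
    nlinarith
  obtain ⟨β, rfl⟩ := QuotientAddGroup.mk_surjective b
  refine ⟨β, fun t ht => cos_le_of_circle_norm (by positivity) ?_⟩
  refine key.trans ((infDist_le_dist_of_mem (mem_image_of_mem _ ht)).trans ?_)
  rw [dist_comm, dist_eq_norm]
  exact le_of_eq rfl

lemma cos_pos' {x s : ℝ} (hs : s < π / 2) (hx : x ∈ Icc (-s) s) : 0 < Real.cos x :=
  Real.cos_pos_of_mem_Ioo ⟨by linarith [hx.1], by linarith [hx.2]⟩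

lemma hasDerivAt_logtan {x : ℝ} (h1 : -(π / 2) < x) (h2 : x < π / 2) :
    HasDerivAt (fun x => Real.log (Real.tan (x / 2 + π / 4))) (1 / Real.cos x) x := by
  have hc : 0 < Real.cos (x / 2 + π / 4) := Real.cos_pos_of_mem_Ioo ⟨by linarith, by linarith⟩
  have hs : 0 < Real.sin (x / 2 + π / 4) := Real.sin_pos_of_pos_of_lt_pi (by linarith) (by linarith)
  have hd : HasDerivAt (fun x : ℝ => x / 2 + π / 4) (1 / 2) x :=
    ((hasDerivAt_id x).div_const 2).add_const _
  have ht := ((Real.hasDerivAt_tan hc.ne').comp x hd).log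
    (by simp only [Function.comp]; rw [Real.tan_eq_sin_div_cos]; positivity)
  refine ht.congr_deriv ?_
  have : Real.cos x = 2 * Real.sin (x / 2 + π / 4) * Real.cos (x / 2 + π / 4) := by
    rw [← Real.sin_two_mul, ← Real.sin_add_pi_div_two]; ring_nf
  simp only [Function.comp]
  rw [this, Real.tan_eq_sin_div_cos]
  field_simp

lemma logtan_neg (s : ℝ) :
    Real.log (Real.tan (-s / 2 + π / 4)) = - Real.log (Real.tan (s / 2 + π / 4)) := by
  rw [← Real.log_inv, ← Real.tan_pi_div_two_sub]; ring_nf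

lemma sin_le_logtan {s : ℝ} (h0 : 0 ≤ s) (hs : s < π / 2) :
    Real.sin s ≤ Real.log (Real.tan (s / 2 + π / 4)) := by
  have hp := Real.pi_pos
  have hder : ∀ x ∈ Icc 0 s, HasDerivAt
      (fun x => Real.log (Real.tan (x / 2 + π / 4)) - Real.sin x) (1 / Real.cos x - Real.cos x) x :=
    fun x hx => (hasDerivAt_logtan (by linarith [hx.1]) (by linarith [hx.2])).sub
      (Real.hasDerivAt_sin x)
  have hm : MonotoneOn (fun x => Real.log (Real.tan (x / 2 + π / 4)) - Real.sin x) (Icc 0 s) := by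
    apply monotoneOn_of_hasDerivWithinAt_nonneg (convex_Icc _ _)
      (fun x hx => (hder x hx).continuousAt.continuousWithinAt)
      (fun x hx => (hder x (interior_subset hx)).hasDerivWithinAt)
    intro x hx
    have hx := interior_subset hx
    have hc : 0 < Real.cos x := cos_pos' hs ⟨by linarith [hx.1], hx.2⟩
    have := Real.cos_le_one x
    rw [sub_nonneg, le_div_iff₀ hc]
    nlinarith
  have := hm ⟨le_rfl, h0⟩ ⟨h0, le_rfl⟩ h0
  simp at this
  simpa using this

lemma explicit_int {s a b : ℝ} (h0 : 0 ≤ s) (hs : s < π / 2) (hab : a ^ 2 + b ^ 2 = 1) :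
    2 * sigmaL1 s ≤ ∫ x in (-s)..s,
      (1 - Real.cos s / Real.cos x) * (a * Real.cos x + b * Real.sin x) ^ 2 := by
  have hI : ∀ x ∈ uIcc (-s) s, x ∈ Icc (-s) s := fun x hx => by rwa [uIcc_of_le (by linarith)] at hx
  set c := Real.cos s with hc
  have hc0 : 0 < c := cos_pos' hs ⟨by linarith, le_rfl⟩
  have hder : ∀ x ∈ uIcc (-s) s, HasDerivAt (fun x =>
      a ^ 2 * (x / 2 + Real.sin x * Real.cos x / 2 - c * Real.sin x)
      + 2 * a * b * (Real.sin x ^ 2 / 2 + c * Real.cos x)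
      + b ^ 2 * (x / 2 - Real.sin x * Real.cos x / 2 - c * Real.log (Real.tan (x / 2 + π / 4))
        + c * Real.sin x))
      ((1 - c / Real.cos x) * (a * Real.cos x + b * Real.sin x) ^ 2) x := by
    intro x hx
    have hx := hI x hx
    have hcx : 0 < Real.cos x := cos_pos' hs hx
    have hl := hasDerivAt_logtan (x := x) (by linarith [hx.1]) (by linarith [hx.2])
    have hsn := Real.hasDerivAt_sin x
    have hcs := Real.hasDerivAt_cos x
    have hid := (hasDerivAt_id x).div_const 2
    have H := (((hid.add ((hsn.mul hcs).div_const 2)).sub (hsn.const_mul c)).const_mul (a ^ 2)).add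
      ((((hsn.pow 2).div_const 2).add (hcs.const_mul c)).const_mul (2 * a * b)) |>.add
      ((((hid.sub ((hsn.mul hcs).div_const 2)).sub (hl.const_mul c)).add
        (hsn.const_mul c)).const_mul (b ^ 2))
    refine H.congr_deriv ?_
    have e : Real.sin x ^ 2 = 1 - Real.cos x ^ 2 := Real.sin_sq x
    field_simp
    ring_nf
    rw [e]
    ring
  rw [intervalIntegral.integral_eq_sub_of_hasDerivAt hder]
  · have h1 := sin_le_logtan h0 hs
    simp only [Real.sin_neg, Real.cos_neg, logtan_neg, sigmaL1, Real.sin_two_mul, ← hc]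
    have : a ^ 2 = 1 - b ^ 2 := by linarith
    have h2 : 0 ≤ a ^ 2 * (c * (Real.log (Real.tan (s / 2 + π / 4)) - Real.sin s)) :=
      mul_nonneg (sq_nonneg _) (mul_nonneg hc0.le (by linarith))
    rw [this] at h2 ⊢
    nlinarith
  · apply ContinuousOn.intervalIntegrable
    apply ContinuousOn.mul
    · exact continuousOn_const.sub (continuousOn_const.div Real.continuous_cos.continuousOn
        (fun x hx => (cos_pos' hs (hI x hx)).ne'))
    · fun_prop

lemma polar_int {s a b : ℝ} (h0 : 0 < s) (hs : s < π / 2) :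
    ∫ z in {z : ℂ | ‖z‖ ≤ 1 ∧ Real.cos s < z.re}, (a * z.re + b * z.im) ^ 2 / ‖z‖ ^ 3
     = ∫ x in (-s)..s, (1 - Real.cos s / Real.cos x) * (a * Real.cos x + b * Real.sin x) ^ 2 := by
  have hp := Real.pi_pos
  set c := Real.cos s with hc
  have hc0 : 0 < c := cos_pos' hs ⟨by linarith, le_rfl⟩
  have hTm : MeasurableSet {z : ℂ | ‖z‖ ≤ 1 ∧ c < z.re} := by
    exact (measurableSet_le measurable_norm measurable_const).inter
      (measurableSet_lt measurable_const Complex.measurable_re)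
  set R : Set (ℝ × ℝ) := {p | p.2 ∈ Ioo (-s) s ∧ p.1 ∈ Ioc (c / Real.cos p.2) 1} with hR
  have hRm : MeasurableSet R := by
    apply MeasurableSet.inter
    · exact measurable_snd measurableSet_Ioo
    · apply MeasurableSet.inter
      · exact measurableSet_lt (f := fun p : ℝ × ℝ => c / Real.cos p.2) (by fun_prop) measurable_fst
      · exact measurableSet_le measurable_fst measurable_const
  set K : ℝ × ℝ → ℝ := R.indicator (fun p => (a * Real.cos p.2 + b * Real.sin p.2) ^ 2) with hK
  have hRt : R ⊆ polarCoord.target := by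
    rintro ⟨r, θ⟩ ⟨h1, h2⟩
    have : 0 < Real.cos θ := cos_pos' hs ⟨h1.1.le, h1.2.le⟩
    refine ⟨lt_trans (by positivity) h2.1, by simp only; linarith [h1.1], by simp only; linarith [h1.2]⟩
  rw [← integral_indicator hTm, ← Complex.integral_comp_polarCoord_symm]
  have e1 : ∫ p in polarCoord.target, p.1 • indicator {z : ℂ | ‖z‖ ≤ 1 ∧ c < z.re}
      (fun z : ℂ => (a * z.re + b * z.im) ^ 2 / ‖z‖ ^ 3) (Complex.polarCoord.symm p)
      = ∫ p in polarCoord.target, K p := by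
    apply setIntegral_congr_fun polarCoord.open_target.measurableSet
    rintro ⟨r, θ⟩ ⟨hr, hθ⟩
    have hr : 0 < r := hr
    have hθ : θ ∈ Ioo (-π) π := hθ
    have hiff : Complex.polarCoord.symm (r, θ) ∈ {z : ℂ | ‖z‖ ≤ 1 ∧ c < z.re} ↔ (r, θ) ∈ R := by
      simp only [mem_ofPred_eq, Complex.norm_polarCoord_symm, abs_of_pos hr, hR, mem_Ioc, mem_Ioo]
      have : (Complex.polarCoord.symm (r, θ)).re = r * Real.cos θ := by
        simp [Complex.cos_ofReal_re]
      rw [this]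
      constructor
      · rintro ⟨h1, h2⟩
        have hcθ : 0 < Real.cos θ := by
          by_contra! h; nlinarith
        have h3 : c < Real.cos θ := by nlinarith
        have h4 : |θ| < s := by
          by_contra! h
          have := Real.cos_le_cos_of_nonneg_of_le_pi h0.le (abs_le.2 ⟨hθ.1.le, hθ.2.le⟩) h
          rw [Real.cos_abs] at this
          linarith
        exact ⟨abs_lt.1 h4, (div_lt_iff₀ hcθ).2 h2, h1⟩
      · rintro ⟨h1, h2, h3⟩
        have hcθ : 0 < Real.cos θ := cos_pos' hs ⟨h1.1.le, h1.2.le⟩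
        exact ⟨h3, (div_lt_iff₀ hcθ).1 h2⟩
    by_cases h : (r, θ) ∈ R
    · simp only [hK]
      rw [indicator_of_mem h, indicator_of_mem (hiff.2 h), Complex.norm_polarCoord_symm]
      simp [abs_of_pos hr, Complex.cos_ofReal_re, Complex.sin_ofReal_re]
      field_simp
    · simp only [hK]
      rw [indicator_of_notMem h, indicator_of_notMem (fun h' => h (hiff.1 h')), smul_zero]
  rw [e1, setIntegral_eq_integral_of_forall_compl_eq_zero
    (fun p hp => indicator_of_notMem (fun h => hp (hRt h)) _)]
  have hRfin : volume R < ⊤ := by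
    have : R ⊆ Icc 0 1 ×ˢ Icc (-s) s := by
      rintro ⟨r, θ⟩ h
      have h' := hRt h
      exact ⟨⟨le_of_lt h'.1, h.2.2⟩, h.1.1.le, h.1.2.le⟩
    exact (measure_mono this).trans_lt (isCompact_Icc.prod isCompact_Icc).measure_lt_top
  have hKi : Integrable K (volume.prod volume) := by
    rw [← Measure.volume_eq_prod, hK, integrable_indicator_iff hRm]
    refine Measure.integrableOn_of_bounded hRfin.ne (by fun_prop) (M := (|a| + |b|) ^ 2) ?_
    refine Filter.Eventually.of_forall fun p => ?_
    rw [Real.norm_eq_abs, abs_pow]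
    gcongr
    refine (abs_add_le _ _).trans ?_
    rw [abs_mul, abs_mul]
    gcongr
    · exact mul_le_of_le_one_right (abs_nonneg _) (Real.abs_cos_le_one _)
    · exact mul_le_of_le_one_right (abs_nonneg _) (Real.abs_sin_le_one _)
  rw [Measure.volume_eq_prod, integral_prod_symm _ hKi, intervalIntegral.integral_of_le (by linarith),
    integral_Ioc_eq_integral_Ioo, ← integral_indicator measurableSet_Ioo]
  congr 1
  ext θ
  by_cases h : θ ∈ Ioo (-s) s
  · rw [indicator_of_mem h]
    have hcθ : 0 < Real.cos θ := cos_pos' hs ⟨h.1.le, h.2.le⟩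
    have hle : c ≤ Real.cos θ := by
      rw [← Real.cos_abs θ]
      exact Real.cos_le_cos_of_nonneg_of_le_pi (abs_nonneg _) (by linarith) (abs_le.2 ⟨h.1.le, h.2.le⟩)
    have : (fun r => K (r, θ)) = (Ioc (c / Real.cos θ) 1).indicator
        (fun _ => (a * Real.cos θ + b * Real.sin θ) ^ 2) := by
      ext r
      by_cases hr : r ∈ Ioc (c / Real.cos θ) 1
      · rw [indicator_of_mem hr, hK, indicator_of_mem]
        exact ⟨h, hr⟩
      · rw [indicator_of_notMem hr, hK, indicator_of_notMem]
        exact fun h' => hr h'.2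
    rw [this, integral_indicator measurableSet_Ioc, setIntegral_const, smul_eq_mul,
      Real.volume_real_Ioc_of_le ((div_le_one hcθ).2 hle)]
  · rw [indicator_of_notMem h]
    have : (fun r => K (r, θ)) = 0 := by
      ext r
      exact indicator_of_notMem (fun h' => h h'.1) _
    rw [this]; simp

lemma ae_norm {P : ℝ → Prop} {c : ℝ} (hPm : MeasurableSet {t | P t})
    (h : ∀ᵐ t ∂(volume.restrict (Icc c 1)), P t) :
    ∀ᵐ z : ℂ, ‖z‖ ∈ Icc c 1 → P ‖z‖ := by
  rw [ae_restrict_iff' measurableSet_Icc] at h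
  set B : Set ℝ := Icc c 1 ∩ {t | P t}ᶜ with hB
  have hBm : MeasurableSet B := measurableSet_Icc.inter hPm.compl
  have hB0 : volume B = 0 := by
    rw [ae_iff] at h
    refine measure_mono_null ?_ h
    rintro t ⟨h1, h2⟩ h3
    exact h2 (h3 h1)
  have hm : MeasurableSet ((fun z : ℂ => ‖z‖) ⁻¹' B) := measurable_norm hBm
  have h1 := integral_fun_norm_addHaar (E := ℂ) volume (B.indicator (fun _ => (1 : ℝ)))
  have h2 : ∫ y in Ioi (0 : ℝ), y ^ (Module.finrank ℝ ℂ - 1) • B.indicator (fun _ => (1 : ℝ)) y = 0 := by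
    apply integral_eq_zero_of_ae
    apply ae_restrict_of_ae
    have : ∀ᵐ y : ℝ, y ∉ B := measure_eq_zero_iff_ae_notMem.1 hB0
    filter_upwards [this] with y hy
    simp [hy]
  rw [h2, smul_zero, smul_zero] at h1
  have h3 : (fun z : ℂ => B.indicator (fun _ => (1 : ℝ)) ‖z‖) =
      ((fun z : ℂ => ‖z‖) ⁻¹' B).indicator (fun _ => (1 : ℝ)) := by
    ext z; rfl
  rw [h3, integral_indicator hm, setIntegral_const, smul_eq_mul, mul_one, Measure.real,
    ENNReal.toReal_eq_zero_iff] at h1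
  have hfin : volume ((fun z : ℂ => ‖z‖) ⁻¹' B) ≠ ⊤ := by
    refine ((measure_mono ?_).trans_lt (measure_closedBall_lt_top (x := (0 : ℂ)) (r := 1))).ne
    intro z hz
    simpa using hz.1.2
  have h4 := h1.resolve_right hfin
  filter_upwards [measure_eq_zero_iff_ae_notMem.1 h4] with z hz hz2
  by_contra hcon
  exact hz ⟨hz2, hcon⟩

abbrev E2 := EuclideanSpace ℝ (Fin 2)

lemma exists_rot (β : ℝ) : ∃ e : ℂ ≃ₗᵢ[ℝ] E2, ∀ z,
    e z 0 = Real.cos β * z.re - Real.sin β * z.im ∧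
    e z 1 = Real.sin β * z.re + Real.cos β * z.im := by
  refine ⟨(rotation (Circle.exp β)).trans Complex.orthonormalBasisOneI.repr, fun z => ?_⟩
  have h := Complex.orthonormalBasisOneI_repr_apply (rotation (Circle.exp β) z)
  constructor
  · have := congrFun h 0
    simp only [LinearIsometryEquiv.trans_apply]
    rw [this]
    simp [Circle.coe_exp, Complex.exp_ofReal_mul_I_re, Complex.exp_ofReal_mul_I_im]
  · have := congrFun h 1
    simp only [LinearIsometryEquiv.trans_apply]
    rw [this]
    simp [Circle.coe_exp, Complex.exp_ofReal_mul_I_re, Complex.exp_ofReal_mul_I_im]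
    ring

lemma F_integrable (γ : ℝ → ℝ) (hγm : Measurable γ) (hγ0 : ∀ ρ, 0 < ρ → ρ ≤ 1 → 0 ≤ γ ρ)
    (hint : IntegrableOn (fun ρ => ρ ^ 3 * γ ρ) (Ioc (0 : ℝ) 1)) (i : Fin 2) :
    IntegrableOn (fun ξ : E2 => (ξ i) ^ 2 * γ ‖ξ‖) (closedBall 0 1) := by
  have hg : Integrable (fun x : E2 => (Ioc (0 : ℝ) 1).indicator (fun ρ => ρ ^ 2 * γ ρ) ‖x‖) := by
    rw [integrable_fun_norm_addHaar (E := E2) volume]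
    have : (fun y : ℝ => y ^ (Module.finrank ℝ E2 - 1) •
        (Ioc (0 : ℝ) 1).indicator (fun ρ => ρ ^ 2 * γ ρ) y) =
        (Ioc (0 : ℝ) 1).indicator (fun ρ => ρ ^ 3 * γ ρ) := by
      ext y
      by_cases hy : y ∈ Ioc (0 : ℝ) 1
      · simp only [indicator_of_mem hy, finrank_euclideanSpace, Fintype.card_fin, smul_eq_mul]
        ring
      · simp only [indicator_of_notMem hy, smul_zero]
    rw [this]
    exact (hint.integrable_indicator measurableSet_Ioc).integrableOn
  refine (hg.integrableOn (s := closedBall 0 1)).mono' ?_ ?_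
  · have : Measurable (fun ξ : E2 => (ξ i) ^ 2 * γ ‖ξ‖) := by fun_prop
    exact this.aestronglyMeasurable
  · rw [ae_restrict_iff' measurableSet_closedBall]
    refine Filter.Eventually.of_forall fun x hx => ?_
    have hx1 : ‖x‖ ≤ 1 := by simpa using hx
    by_cases h0 : x = 0
    · simp [h0]
    · have hpos : 0 < ‖x‖ := norm_pos_iff.2 h0
      rw [indicator_of_mem (show ‖x‖ ∈ Ioc (0 : ℝ) 1 from ⟨hpos, hx1⟩), norm_mul,
        Real.norm_eq_abs (γ _), abs_of_nonneg (hγ0 _ hpos hx1), norm_pow]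
      gcongr
      · exact hγ0 _ hpos hx1
      · exact PiLp.norm_apply_le x i

/-- quantitative non-convergence for polygonal neighborhoods,
first-order kernel case. -/
theorem stmt13 (N : ℕ) (hN : 3 ≤ N) (L₁ : ℝ) (hL₁ : 0 < L₁)
    (γ : ℝ → ℝ) (hγm : Measurable γ) (hγ0 : ∀ ρ, 0 < ρ → ρ ≤ 1 → 0 ≤ γ ρ)
    (hint : IntegrableOn (fun ρ => ρ ^ 3 * γ ρ) (Ioc (0 : ℝ) 1))
    (hlow : ∀ᵐ t ∂(volume.restrict (Icc (Real.cos (π / N)) 1)), L₁ ≤ π * t ^ 3 * γ t)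
    (S : Set (EuclideanSpace ℝ (Fin 2))) (hSfin : S.Finite) (hScard : S.ncard ≤ N)
    (hScirc : ∀ ξ ∈ S, ‖ξ‖ = 1) (i : Fin 2) :
    (2 * L₁ / π) * sigmaL1 (π / N) ≤
      ∫ ξ in closedBall (0 : EuclideanSpace ℝ (Fin 2)) 1 \ convexHull ℝ S,
        (ξ i) ^ 2 * γ ‖ξ‖ := by
  have hp := Real.pi_pos
  have hN3 : (3 : ℝ) ≤ N := by exact_mod_cast hN
  set s := π / N with hs
  have hs0 : 0 < s := by positivity
  have hs2 : s < π / 2 := div_lt_div_of_pos_left hp (by norm_num) (by linarith)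
  set c := Real.cos s with hc
  have hc0 : 0 < c := cos_pos' hs2 ⟨by linarith, le_rfl⟩
  have hFint := F_integrable γ hγm hγ0 hint i
  -- choose the direction
  set ar : E2 → ℝ := fun ξ => Complex.arg ⟨ξ 0, ξ 1⟩ with har
  obtain ⟨β, hβ⟩ := exists_gap N hN (ar '' S) (hSfin.image _) ((Set.ncard_image_le hSfin).trans hScard)
  obtain ⟨e, he⟩ := exists_rot β
  set l : E2 → ℝ := fun ξ => Real.cos β * ξ 0 + Real.sin β * ξ 1 with hl
  have hlS : ∀ ξ ∈ S, l ξ ≤ c := by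
    intro ξ hξ
    have h1 := hβ _ (mem_image_of_mem ar hξ)
    have h2 : ‖(⟨ξ 0, ξ 1⟩ : ℂ)‖ = 1 := by
      have := hScirc ξ hξ
      rw [EuclideanSpace.norm_eq, Fin.sum_univ_two] at this
      rw [Complex.norm_eq_sqrt_sq_add_sq, ← this]
      simp
    have h3 := Complex.norm_mul_cos_arg (⟨ξ 0, ξ 1⟩ : ℂ)
    have h4 := Complex.norm_mul_sin_arg (⟨ξ 0, ξ 1⟩ : ℂ)
    rw [h2, one_mul] at h3 h4
    rw [Real.cos_sub] at h1
    simp only [har] at h1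
    rw [h3, h4] at h1
    simp only [hl]
    simp only at h1
    linarith
  have hllin : IsLinearMap ℝ l := by
    constructor
    · intro x y; simp [hl]; ring
    · intro k x; simp [hl]; ring
  have hlm : Measurable l := by simp only [hl]; fun_prop
  have hhull : convexHull ℝ S ⊆ {ξ | l ξ ≤ c} := convexHull_min hlS (convex_halfSpace_le hllin c)
  have hle : ∀ z, l (e z) = z.re := by
    intro z
    simp only [hl, (he z).1, (he z).2]
    linear_combination z.re * Real.sin_sq_add_cos_sq β
  set D : Set E2 := {ξ | ‖ξ‖ ≤ 1 ∧ c < l ξ} with hD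
  have hDm : MeasurableSet D := (measurableSet_le measurable_norm measurable_const).inter
      (measurableSet_lt measurable_const hlm)
  have hsub : D ⊆ closedBall 0 1 \ convexHull ℝ S := by
    rintro ξ ⟨h1, h2⟩
    exact ⟨by simpa using h1, fun h => absurd (hhull h) (not_le.2 h2)⟩
  have hQm : MeasurableSet (closedBall (0 : E2) 1 \ convexHull ℝ S) :=
    measurableSet_closedBall.diff (hSfin.isCompact_convexHull ℝ).isClosed.measurableSet
  have step1 : ∫ ξ in D, (ξ i) ^ 2 * γ ‖ξ‖ ≤
      ∫ ξ in closedBall (0 : E2) 1 \ convexHull ℝ S, (ξ i) ^ 2 * γ ‖ξ‖ := by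
    refine setIntegral_mono_set (hFint.mono_set sdiff_subset) ?_ hsub.eventuallyLE
    rw [Filter.EventuallyLE, ae_restrict_iff' hQm]
    refine Filter.Eventually.of_forall fun x hx => ?_
    have hx1 : ‖x‖ ≤ 1 := by simpa using hx.1
    by_cases h0 : x = 0
    · simp [h0]
    · exact mul_nonneg (sq_nonneg _) (hγ0 _ (norm_pos_iff.2 h0) hx1)
  refine le_trans ?_ step1
  have hmp := e.measurePreserving
  have hemb : MeasurableEmbedding e := e.toHomeomorph.measurableEmbedding
  rw [← hmp.setIntegral_preimage_emb hemb]
  have hpre : e ⁻¹' D = {z : ℂ | ‖z‖ ≤ 1 ∧ c < z.re} := by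
    ext z
    simp [hD, hle]
  have hIe : IntegrableOn (fun z => (e z i) ^ 2 * γ ‖e z‖) (e ⁻¹' D) :=
    (hmp.integrableOn_comp_preimage hemb).2 (hFint.mono_set (hsub.trans sdiff_subset))
  obtain ⟨a, b, hab, hei⟩ : ∃ a b : ℝ, a ^ 2 + b ^ 2 = 1 ∧ ∀ z, e z i = a * z.re + b * z.im := by
    fin_cases i
    · refine ⟨Real.cos β, -Real.sin β, by simp, fun z => ?_⟩
      simp only [Fin.zero_eta, (he z).1]; ring
    · exact ⟨Real.sin β, Real.cos β, by simp, fun z => (he z).2⟩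
  have hTm : MeasurableSet (e ⁻¹' D) := hemb.measurable hDm
  have hae := ae_norm (P := fun t => L₁ ≤ π * t ^ 3 * γ t)
    (measurableSet_le measurable_const (by fun_prop)) hlow
  have step2 : ∫ z in e ⁻¹' D, L₁ / π * ((a * z.re + b * z.im) ^ 2 / ‖z‖ ^ 3) ≤
      ∫ z in e ⁻¹' D, (e z i) ^ 2 * γ ‖e z‖ := by
    refine integral_mono_of_nonneg (Filter.Eventually.of_forall fun z => by positivity) hIe ?_
    rw [Filter.EventuallyLE, ae_restrict_iff' hTm]
    filter_upwards [hae] with z hz hzD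
    rw [hpre] at hzD
    have h1 : c ≤ ‖z‖ := hzD.2.le.trans (Complex.re_le_norm z)
    have h2 := hz ⟨h1, hzD.1⟩
    have hzp : 0 < ‖z‖ := hc0.trans_le h1
    rw [hei, e.norm_map]
    have h3 : L₁ / π / ‖z‖ ^ 3 ≤ γ ‖z‖ := by
      rw [div_div, div_le_iff₀ (by positivity)]
      linarith
    calc _ = (a * z.re + b * z.im) ^ 2 * (L₁ / π / ‖z‖ ^ 3) := by ring
      _ ≤ _ := by gcongr
  refine le_trans ?_ step2
  rw [integral_const_mul, hpre, polar_int hs0 hs2]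
  have := explicit_int hs0.le hs2 hab
  calc _ = L₁ / π * (2 * sigmaL1 s) := by ring
    _ ≤ _ := by gcongr
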